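/- Let g > 0 be a gain factor, and for two scene points i and j let ρ_i, ρ_j ∈ (0,1) be albedos and η_i, η_j > 0 be shading values, with visible intensities I_v,i = g·ρ_i·η_i and I_v,j = g·ρ_j·η_j and heat source intensities S_i = (1−ρ_i)·η_i and S_j = (1−ρ_j)·η_j. If S_i < S_j and I_v,i > I_v,j, then ρ_i > ρ_j. -/

import Mathlib

/-!
Suppose the albedo at `i` is at most the albedo at `j`, and compare the shadings. If the shading at
`i` is also the smaller one, then `i` reflects no more light than `j`; if it is the larger one, then
`i` absorbs at least as much light as `j`.
-/

section

variable {R : Type*} [Ring R] [LinearOrder R] [IsOrderedRing R]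

theorem lt_of_mul_lt_mul_of_one_sub_mul_lt_one_sub_mul {a b x y : R}
    (ha : a ∈ Set.Icc 0 1) (hy : 0 ≤ y) (hmul : a * x < b * y)
    (hsub : (1 - b) * y < (1 - a) * x) : a < b := by
  by_contra! hba
  rcases le_total y x with hyx | hxy
  · exact hmul.not_ge (mul_le_mul hba hyx hy ha.1)
  · have hcompl : 1 - a ≤ 1 - b := sub_le_sub_left hba 1
    have hcompl_nonneg : 0 ≤ 1 - a := sub_nonneg.2 ha.2
    exact hsub.not_ge <| calc
      (1 - a) * x ≤ (1 - a) * y := mul_le_mul_of_nonneg_left hxy hcompl_nonneg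
      _ ≤ (1 - b) * y := mul_le_mul_of_nonneg_right hcompl hy

theorem albedo_ordinal_neg_general {g ρi ρj ηi ηj : R} (hg : 0 ≤ g)
    (hρj : ρj ∈ Set.Icc 0 1) (hηi : 0 ≤ ηi)
    (hS : (1 - ρi) * ηi < (1 - ρj) * ηj) (hIv : g * ρi * ηi > g * ρj * ηj) :
    ρi > ρj := by
  have hreflected : ρj * ηj < ρi * ηi := by
    simp only [mul_assoc] at hIv
    exact (monotone_mul_left_of_nonneg hg).reflect_lt hIv
  exact lt_of_mul_lt_mul_of_one_sub_mul_lt_one_sub_mul hρj hηi hreflected hS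

end

theorem albedo_ordinal_neg
    (g ρi ρj ηi ηj Ivi Ivj Si Sj : ℝ)
    (hg : 0 < g)
    (hρi : ρi ∈ Set.Ioo (0 : ℝ) 1) (hρj : ρj ∈ Set.Ioo (0 : ℝ) 1)
    (hηi : 0 < ηi) (hηj : 0 < ηj)
    (hIvi : Ivi = g * ρi * ηi) (hIvj : Ivj = g * ρj * ηj)
    (hSi : Si = (1 - ρi) * ηi) (hSj : Sj = (1 - ρj) * ηj)
    (hS : Si < Sj) (hIv : Ivi > Ivj) :
    ρi > ρj := by
  subst hIvi hIvj hSi hSj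
  exact albedo_ordinal_neg_general hg.le (Set.Ioo_subset_Icc_self hρj) hηi.le hS hIv
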